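/- arXiv:2107.11199 — 3 statements merged into one kernel-verified Lean document; each statement's English description precedes it below -/
import Mathlib

section
/- Let (X,d) be a metric space, T : X → X a type 1 φ_{x₀}-contraction with point x₀ ∈ X and given function φ : X → [0,∞). If φ(x₀) = 0 and φ(x) ≤ d(Tx,x) for all x ∈ D_{x₀,ρ}, then the disc D_{x₀,ρ} is a φ-fixed disc of T, i.e. D_{x₀,ρ} ⊆ Fix(T) ∩ Z_φ. -/
/-!
Suppose a point `x` of the disc is moved by `T`. Its displacement is at least the radius, hence at
least `d(x, x₀)`, and it is also at least `φ x`; so a contraction that bounds the displacement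
strictly by `max {d(x, x₀), φ x, φ x₀}` can only hold if `φ x₀` exceeds the displacement. At
`x = x₀` this is excluded by `φ x₀ ≤ d(T x₀, x₀)`, so the centre is fixed and `φ x₀ = 0`, which
excludes it everywhere else.
-/

open Function Metric Set

theorem lt_of_le_mul_of_lt_one {R : Type*} [Semiring R] [LinearOrder R] [IsStrictOrderedRing R]
    {a b k : R} (ha : 0 < a) (hk₀ : 0 ≤ k) (hk₁ : k < 1) (h : a ≤ k * b) : a < b :=
  have hb : 0 < b := pos_of_mul_pos_right (ha.trans_le h) hk₀
  h.trans_lt (mul_lt_of_lt_one_left hb hk₁)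

/-- The number `ρ` attached to `T` in the theorem on φ-fixed discs: the infimum of the displacements
of the points moved by `T`, equal to `0` when `T` is the identity. -/
noncomputable def displacementInf {X : Type*} [PseudoMetricSpace X] (T : X → X) : ℝ :=
  sInf {r : ℝ | ∃ y, T y ≠ y ∧ r = dist (T y) y}

theorem displacementInf_le {X : Type*} [PseudoMetricSpace X] {T : X → X} {x : X} (hx : T x ≠ x) :
    displacementInf T ≤ dist (T x) x := by
  refine csInf_le ⟨0, ?_⟩ ⟨x, hx, rfl⟩
  rintro _ ⟨y, -, rfl⟩
  exact dist_nonneg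

/-- Type 1 `φ_{x₀}`-contractions. The function `φ` takes real values; its nonnegativity is a
separate hypothesis where it matters. -/
def IsTypeOneContraction {X : Type*} [PseudoMetricSpace X] (T : X → X) (φ : X → ℝ) (x₀ : X) :
    Prop :=
  ∃ k ∈ Ioo (0 : ℝ) 1, ∀ x : X, 0 < dist (T x) x →
    max (max (dist x (T x)) (φ (T x))) (φ x) ≤ k * max (max (dist x x₀) (φ x)) (φ x₀)

theorem IsTypeOneContraction.dist_map_self_lt {X : Type*} [PseudoMetricSpace X] {T : X → X}
    {φ : X → ℝ} {x₀ x : X} (hT : IsTypeOneContraction T φ x₀) (hx : 0 < dist (T x) x) :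
    dist (T x) x < max (max (dist x x₀) (φ x)) (φ x₀) := by
  obtain ⟨k, ⟨hk₀, hk₁⟩, hk⟩ := hT
  refine lt_of_le_mul_of_lt_one hx hk₀.le hk₁ ?_
  calc dist (T x) x = dist x (T x) := dist_comm _ _
    _ ≤ max (max (dist x (T x)) (φ (T x))) (φ x) := le_max_of_le_left (le_max_left _ _)
    _ ≤ k * max (max (dist x x₀) (φ x)) (φ x₀) := hk x hx

theorem stmt_1_general {X : Type*} [PseudoMetricSpace X] {T : X → X} {φ : X → ℝ} {x₀ : X} {r : ℝ}
    (hφ : ∀ x ∈ closedBall x₀ r, 0 ≤ φ x)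
    (hT : ∀ x ∈ closedBall x₀ r, T x ≠ x →
      dist (T x) x < max (max (dist x x₀) (φ x)) (φ x₀))
    (hr : ∀ x ∈ closedBall x₀ r, T x ≠ x → r ≤ dist (T x) x)
    (hφT : ∀ x ∈ closedBall x₀ r, φ x ≤ dist (T x) x) :
    closedBall x₀ r ⊆ fixedPoints T ∩ φ ⁻¹' {0} := by
  have fixed_of_le : ∀ x ∈ closedBall x₀ r, φ x₀ ≤ dist (T x) x → T x = x := by
    intro x hx hφx₀
    by_contra hne
    have hdist : dist x x₀ ≤ dist (T x) x := (mem_closedBall.1 hx).trans (hr x hx hne)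
    exact (hT x hx hne).not_ge (max_le (max_le hdist (hφT x hx)) hφx₀)
  have zero_of_fixed : ∀ x ∈ closedBall x₀ r, T x = x → φ x = 0 := by
    intro x hx hfix
    have hle : φ x ≤ 0 := by simpa only [hfix, dist_self] using hφT x hx
    exact hle.antisymm (hφ x hx)
  intro x hx
  have hx₀ : x₀ ∈ closedBall x₀ r := mem_closedBall_self (nonempty_closedBall.1 ⟨x, hx⟩)
  have hφx₀ : φ x₀ = 0 := zero_of_fixed x₀ hx₀ (fixed_of_le x₀ hx₀ (hφT x₀ hx₀))
  have hfix : T x = x := fixed_of_le x hx (hφx₀.trans_le dist_nonneg)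
  exact ⟨hfix, zero_of_fixed x hx hfix⟩

/-- Auto-formalization of a φ-fixed disc theorem. -/
theorem stmt_1 {X : Type*} [MetricSpace X] (T : X → X) (φ : X → ℝ)
    (hφ : ∀ x, 0 ≤ φ x) (x₀ : X)
    (hT : ∃ k ∈ Set.Ioo (0:ℝ) 1, ∀ x : X, 0 < dist (T x) x →
      max (max (dist x (T x)) (φ (T x))) (φ x) ≤
        k * max (max (dist x x₀) (φ x)) (φ x₀))
    (hx₀ : φ x₀ = 0)
    (ρ : ℝ) (hρ : ρ = sInf {r : ℝ | ∃ y, T y ≠ y ∧ r = dist (T y) y})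
    (hineq : ∀ x : X, dist x x₀ ≤ ρ → φ x ≤ dist (T x) x) :
    ∀ x : X, dist x x₀ ≤ ρ → T x = x ∧ φ x = 0 :=
  stmt_1_general (fun x _ ↦ hφ x)
    (fun _ _ hx ↦ IsTypeOneContraction.dist_map_self_lt hT (dist_pos.2 hx))
    (fun _ _ hx ↦ hρ.trans_le (displacementInf_le hx)) hineq
end

section
/- Let (X,d) be a metric space, T : X → X a type 3 φ_{x₀}-contraction with point x₀ ∈ X and given function φ : X → [0,∞). If φ(x₀) = 0 and φ(x) ≤ d(Tx,x) for all x ∈ C_{x₀,ρ}, then the circle C_{x₀,ρ} is a φ-fixed circle of T, i.e. C_{x₀,ρ} ⊆ Fix(T) ∩ Z_φ. -/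
/-!
The contraction inequality carries `φ x` on both sides, and cancelling it shows that a point `x`
moved by `T` satisfies `d(Tx, x) < d(x, x₀) + φ(x₀)`. Every moved point also satisfies
`ρ ≤ d(Tx, x)`, so `T` fixes each `x` with `d(x, x₀) + φ(x₀) ≤ ρ`; at a fixed point the bound
`φ x ≤ d(Tx, x)` says `φ x ≤ 0`.
-/

section PseudoMetricSpace

variable {X : Type*} [PseudoMetricSpace X]

/-- The type 3 `φ_{x₀}`-contraction inequality for `T`, with the constant `k` as a parameter; the
requirement `k ∈ (0, 1)` is not part of the predicate. -/
def IsTypeThreePhiContraction (T : X → X) (φ : X → ℝ) (x₀ : X) (k : ℝ) : Prop :=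
  ∀ x, 0 < dist (T x) x → dist x (T x) + φ (T x) + φ x ≤ k * (dist x x₀ + φ x + φ x₀)

/-- The number `ρ`: the infimum of the distances by which `T` moves its non-fixed points. It is `0`
when every point is fixed, since `sInf ∅ = 0` in `ℝ`. -/
noncomputable def infDisplacement (T : X → X) : ℝ :=
  sInf {r : ℝ | ∃ y, T y ≠ y ∧ r = dist (T y) y}

theorem infDisplacement_le_dist {T : X → X} {x : X} (hx : T x ≠ x) :
    infDisplacement T ≤ dist (T x) x := by
  refine csInf_le ⟨0, ?_⟩ ⟨x, hx, rfl⟩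
  rintro _ ⟨y, -, rfl⟩
  exact dist_nonneg

theorem IsTypeThreePhiContraction.dist_map_self_lt {T : X → X} {φ : X → ℝ} {x₀ x : X} {k : ℝ}
    (hT : IsTypeThreePhiContraction T φ x₀ k) (hk : k < 1) (hφ : ∀ y, 0 ≤ φ y)
    (hx : 0 < dist (T x) x) : dist (T x) x < dist x x₀ + φ x₀ := by
  have contraction : dist (T x) x + φ (T x) + φ x ≤ k * (dist x x₀ + φ x + φ x₀) :=
    dist_comm x (T x) ▸ hT x hx
  have sum_nonneg : 0 ≤ dist x x₀ + φ x + φ x₀ :=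
    add_nonneg (add_nonneg dist_nonneg (hφ x)) (hφ x₀)
  have mul_sum_pos : 0 < k * (dist x x₀ + φ x + φ x₀) := by linarith [hφ x, hφ (T x)]
  have sum_pos : 0 < dist x x₀ + φ x + φ x₀ :=
    sum_nonneg.lt_of_ne' (right_ne_zero_of_mul mul_sum_pos.ne')
  have mul_sum_lt : k * (dist x x₀ + φ x + φ x₀) < dist x x₀ + φ x + φ x₀ :=
    mul_lt_of_lt_one_left sum_pos hk
  linarith [hφ (T x)]

end PseudoMetricSpace

section MetricSpace

variable {X : Type*} [MetricSpace X] {T : X → X} {φ : X → ℝ} {x₀ x : X} {k : ℝ}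

theorem IsTypeThreePhiContraction.map_eq_self (hT : IsTypeThreePhiContraction T φ x₀ k)
    (hk : k < 1) (hφ : ∀ y, 0 ≤ φ y) (hx : dist x x₀ + φ x₀ ≤ infDisplacement T) : T x = x := by
  by_contra hne
  exact (hT.dist_map_self_lt hk hφ (dist_pos.mpr hne)).not_ge
    (hx.trans (infDisplacement_le_dist hne))

theorem stmt_8_general (hT : IsTypeThreePhiContraction T φ x₀ k) (hk : k < 1)
    (hφ : ∀ y, 0 ≤ φ y) (hx : dist x x₀ + φ x₀ ≤ infDisplacement T)
    (hφx : φ x ≤ dist (T x) x) : T x = x ∧ φ x = 0 := by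
  have hfix : T x = x := hT.map_eq_self hk hφ hx
  rw [hfix, dist_self] at hφx
  exact ⟨hfix, hφx.antisymm (hφ x)⟩

end MetricSpace

/-- Auto-formalization of a φ-fixed circle theorem. -/
theorem stmt_8 {X : Type*} [MetricSpace X] (T : X → X) (φ : X → ℝ)
    (hφ : ∀ x, 0 ≤ φ x) (x₀ : X)
    (hT : ∃ k ∈ Set.Ioo (0:ℝ) 1, ∀ x : X, 0 < dist (T x) x →
      dist x (T x) + φ (T x) + φ x ≤
        k * (dist x x₀ + φ x + φ x₀))
    (hx₀ : φ x₀ = 0)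
    (ρ : ℝ) (hρ : ρ = sInf {r : ℝ | ∃ y, T y ≠ y ∧ r = dist (T y) y})
    (hineq : ∀ x : X, dist x x₀ = ρ → φ x ≤ dist (T x) x) :
    ∀ x : X, dist x x₀ = ρ → T x = x ∧ φ x = 0 := by
  obtain ⟨k, ⟨-, hk⟩, hT⟩ := hT
  intro x hx
  have hball : dist x x₀ + φ x₀ ≤ infDisplacement T := by
    rw [hx, hx₀, add_zero]
    exact hρ.le
  exact stmt_8_general hT hk hφ hball (hineq x hx)
end

section
/- Let (X,d) be a metric space, T : X → X a type 3 φ_{x₀}-contraction with point x₀ ∈ X and given function φ : X → [0,∞). If φ(x₀) = 0 and φ(x) ≤ d(Tx,x) for all x ∈ D_{x₀,ρ}, then the disc D_{x₀,ρ} is a φ-fixed disc of T, i.e. D_{x₀,ρ} ⊆ Fix(T) ∩ Z_φ. -/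
/-!
If the centre is fixed, the bound on `φ` makes it a zero of `φ`; if it were not fixed, the
contraction inequality at `x₀` would give `d(Tx₀, x₀) < φ(x₀)`, against the same bound. Once
`φ(x₀) = 0`, a point `x` of the disc moved by `T` would satisfy `d(Tx, x) < d(x, x₀) ≤ ρ`, while
every moved point is displaced by at least `ρ`. So `T` fixes the disc pointwise, and there
`φ(x) ≤ d(Tx, x) = 0`.
-/

open Function Metric

section PseudoMetric

variable {X : Type*} [PseudoMetricSpace X] {T : X → X} {φ : X → ℝ} {x₀ : X} {ρ : ℝ}

lemma sInf_dist_le_of_ne {x : X} (hx : T x ≠ x) :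
    sInf {r : ℝ | ∃ y, T y ≠ y ∧ r = dist (T y) y} ≤ dist (T x) x := by
  refine csInf_le ⟨0, ?_⟩ ⟨x, hx, rfl⟩
  rintro r ⟨y, -, rfl⟩
  exact dist_nonneg

lemma dist_lt_of_typeThree_contraction (hφ : ∀ x, 0 ≤ φ x) {k : ℝ} (hk : k < 1) {x : X}
    (hx : 0 < dist (T x) x)
    (hle : dist x (T x) + φ (T x) + φ x ≤ k * (dist x x₀ + φ x + φ x₀)) :
    dist (T x) x < dist x x₀ + φ x₀ := by
  rw [dist_comm x (T x)] at hle
  have hφx := hφ x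
  have hφTx := hφ (T x)
  have hbound_nonneg : 0 ≤ dist x x₀ + φ x + φ x₀ :=
    add_nonneg (add_nonneg dist_nonneg hφx) (hφ x₀)
  have hmul_le : k * (dist x x₀ + φ x + φ x₀) ≤ dist x x₀ + φ x + φ x₀ :=
    mul_le_of_le_one_left hbound_nonneg hk.le
  have hbound_pos : 0 < dist x x₀ + φ x + φ x₀ := by linarith
  have hmul_lt : k * (dist x x₀ + φ x + φ x₀) < dist x x₀ + φ x + φ x₀ :=
    mul_lt_of_lt_one_left hbound_pos hk
  linarith

lemma closedBall_subset_fixedPoints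
    (hT : ∀ x ∈ closedBall x₀ ρ, T x ≠ x → dist (T x) x < dist x x₀)
    (hρ : ∀ x ∈ closedBall x₀ ρ, T x ≠ x → ρ ≤ dist (T x) x) :
    closedBall x₀ ρ ⊆ fixedPoints T := by
  intro x hx
  by_contra hne
  exact ((hT x hx hne).trans_le (mem_closedBall.1 hx)).not_ge (hρ x hx hne)

theorem stmt_9_general (hφ : ∀ x, 0 ≤ φ x)
    (hT : ∀ x ∈ closedBall x₀ ρ, T x ≠ x → dist (T x) x < dist x x₀ + φ x₀)
    (hρ : ∀ x ∈ closedBall x₀ ρ, T x ≠ x → ρ ≤ dist (T x) x)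
    (hφ_le : ∀ x ∈ closedBall x₀ ρ, φ x ≤ dist (T x) x) :
    closedBall x₀ ρ ⊆ fixedPoints T ∩ φ ⁻¹' {0} := by
  intro x hx
  have hφ_eq_zero : ∀ y ∈ closedBall x₀ ρ, T y = y → φ y = 0 := fun y hy hfix =>
    le_antisymm (by simpa only [hfix, dist_self] using hφ_le y hy) (hφ y)
  have hx₀_mem : x₀ ∈ closedBall x₀ ρ := mem_closedBall_self (dist_nonneg.trans hx)
  have hx₀_fixed : T x₀ = x₀ := by
    by_contra hne
    have hlt : dist (T x₀) x₀ < φ x₀ := by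
      simpa only [dist_self, zero_add] using hT x₀ hx₀_mem hne
    exact hlt.not_ge (hφ_le x₀ hx₀_mem)
  have hx_fixed : x ∈ fixedPoints T := by
    simp only [hφ_eq_zero x₀ hx₀_mem hx₀_fixed, add_zero] at hT
    exact closedBall_subset_fixedPoints hT hρ hx
  exact ⟨hx_fixed, hφ_eq_zero x hx hx_fixed⟩

end PseudoMetric

/-- Auto-formalization of a φ-fixed disc theorem. -/
theorem stmt_9 {X : Type*} [MetricSpace X] (T : X → X) (φ : X → ℝ)
    (hφ : ∀ x, 0 ≤ φ x) (x₀ : X)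
    (hT : ∃ k ∈ Set.Ioo (0:ℝ) 1, ∀ x : X, 0 < dist (T x) x →
      dist x (T x) + φ (T x) + φ x ≤
        k * (dist x x₀ + φ x + φ x₀))
    (hx₀ : φ x₀ = 0)
    (ρ : ℝ) (hρ : ρ = sInf {r : ℝ | ∃ y, T y ≠ y ∧ r = dist (T y) y})
    (hineq : ∀ x : X, dist x x₀ ≤ ρ → φ x ≤ dist (T x) x) :
    ∀ x : X, dist x x₀ ≤ ρ → T x = x ∧ φ x = 0 := by
  obtain ⟨k, ⟨-, hk⟩, hcontr⟩ := hT
  exact stmt_9_general hφ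
    (fun x _ hx =>
      dist_lt_of_typeThree_contraction hφ hk (dist_pos.2 hx) (hcontr x (dist_pos.2 hx)))
    (fun _ _ hx => hρ.trans_le (sInf_dist_le_of_ne hx)) hineq
end
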